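/- arXiv:2602.00906 — 2 statements merged into one kernel-verified Lean document; each statement's English description precedes it below -/
import Mathlib

section
/- Fix error metrics d^K, d^N satisfying the stated assumptions and error levels εK, εN ≥ 0 such that C_K(εK) and C_N(εN) are nonempty. For each p ∈ (0,1), the infimum defining R_p(εK, εN) = inf{F_p(μK, μN) : (μK, μN) ∈ C_K(εK) × C_N(εN)} is attained, and as p → 0⁺, R_p(εK, εN) converges to min{KL(μK ‖ μN) : (μK, μN) ∈ C_K(εK) × C_N(εN)}. -/
/- STATEMENT 6: For each p ∈ (0,1) the infimum defining R_p(εK, εN) is attained, and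
   as p → 0⁺, R_p(εK, εN) converges to min{KL(μK ‖ μN)} over the feasible region
   (which is attained). -/

open MeasureTheory Filter Topology
open scoped ENNReal

abbrev I01 : Set ℝ := Set.Icc 0 1

open Classical in
/-- Kullback–Leibler divergence with logarithm base 2, valued in `EReal`. -/
noncomputable def klDiv2 {α : Type*} [MeasurableSpace α] (μ ν : Measure α) : EReal :=
  if μ ≪ ν ∧ Integrable (fun x => Real.logb 2 ((μ.rnDeriv ν x).toReal)) μ
  then ((∫ x, Real.logb 2 ((μ.rnDeriv ν x).toReal) ∂μ : ℝ) : EReal)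
  else ⊤

noncomputable def mix {α : Type*} [MeasurableSpace α] (p : ℝ) (μ ν : Measure α) : Measure α :=
  (ENNReal.ofReal p) • μ + (ENNReal.ofReal (1 - p)) • ν

/-- `F_p(μK, μN)`, with `F_0(μK, μN) = KL(μK ‖ μN)`. -/
noncomputable def Fp {α : Type*} [MeasurableSpace α] (p : ℝ) (μK μN : Measure α) : EReal :=
  if p = 0 then klDiv2 μK μN
  else klDiv2 μK (mix p μK μN) + (((1 - p) / p : ℝ) : EReal) * klDiv2 μN (mix p μK μN)

/-- The feasibility predicate: `(μK, μN)` is a pair of probability measures on `[0,1]`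
satisfying the error constraints `E_{μK}[d^K] ≤ εK` and `E_{μN}[d^N] ≤ εN`. -/
def Feasible (dK dN : I01 → ℝ≥0∞) (εK εN : ℝ) (μK μN : Measure I01) : Prop :=
  IsProbabilityMeasure μK ∧ IsProbabilityMeasure μN ∧
    (∫⁻ x, dK x ∂μK) ≤ ENNReal.ofReal εK ∧ (∫⁻ x, dN x ∂μN) ≤ ENNReal.ofReal εN

/-- The rate function `R_p(εK, εN) = inf{F_p(μK, μN) : (μK, μN) feasible}`. -/
noncomputable def Rp (dK dN : I01 → ℝ≥0∞) (εK εN : ℝ) (p : ℝ) : EReal :=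
  sInf {e : EReal | ∃ μK μN : Measure I01, Feasible dK dN εK εN μK μN ∧ Fp p μK μN = e}


/-!
In nats, the divergence has the dual representation
`KL(μ ‖ ν) = sup_g (∫ g ∂μ - ∫ (exp g - 1) ∂ν)` over bounded continuous `g`, so it is jointly
lower semicontinuous for weak convergence; with compactness of the feasible set this gives
attainment. With `μ_p = p μK + (1 - p) μN`, the compensation identity
`KL(μK ‖ μN) = F_p(μK, μN) + KL(μ_p ‖ μN) / p` yields the sandwich
`KL(μK ‖ μ_p) ≤ F_p(μK, μN) ≤ KL(μK ‖ μN)`. Its lower end is jointly lower semicontinuous in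
`(p, μK, μN)` and equals the upper end at `p = 0`, so on a compact set the minima converge.
-/

open InformationTheory
open scoped BoundedContinuousFunction

section Duality

variable {X : Type*} [MeasurableSpace X] {μ ν : Measure X} {g : X → ℝ} {B S : ℝ}

/-- The Donsker–Varadhan functional `∫ g ∂μ - ∫ (exp g - 1) ∂ν`, the Legendre–Fenchel dual
expression of the Kullback–Leibler divergence in nats at the test function `g`. -/
noncomputable def klDual (g : X → ℝ) (μ ν : Measure X) : ℝ :=
  ∫ x, g x ∂μ - ∫ x, (Real.exp (g x) - 1) ∂ν

theorem mul_sub_exp_sub_one_le_klFun {x : ℝ} (hx : 0 ≤ x) (y : ℝ) :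
    x * y - (Real.exp y - 1) ≤ klFun x := by
  rcases hx.eq_or_lt with rfl | hx
  · simpa only [klFun_zero, zero_mul, zero_sub, neg_sub, sub_le_self_iff] using (Real.exp_pos y).le
  · have h := mul_le_mul_of_nonneg_left (Real.add_one_le_exp (y - Real.log x)) hx.le
    rw [Real.exp_sub, Real.exp_log hx, mul_div_cancel₀ _ hx.ne'] at h
    rw [klFun_apply]
    linarith

theorem exp_sub_one_abs_le {y : ℝ} (hy : |y| ≤ B) : |Real.exp y - 1| ≤ Real.exp B + 1 := by
  have hexp : Real.exp y ≤ Real.exp B := Real.exp_le_exp.2 ((le_abs_self y).trans hy)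
  rw [abs_le]
  constructor <;> linarith [Real.exp_pos y, Real.exp_pos B]

theorem integrable_of_abs_le [IsFiniteMeasure μ] (hg : Measurable g) (hB : ∀ x, |g x| ≤ B) :
    Integrable g μ :=
  .of_bound hg.aestronglyMeasurable B (ae_of_all _ hB)

theorem integrable_exp_sub_one [IsFiniteMeasure μ] (hg : Measurable g) (hB : ∀ x, |g x| ≤ B) :
    Integrable (fun x ↦ Real.exp (g x) - 1) μ :=
  integrable_of_abs_le (by fun_prop) fun x ↦ exp_sub_one_abs_le (hB x)

theorem integrable_rnDeriv_mul_sub_exp_sub_one [IsFiniteMeasure μ] [IsFiniteMeasure ν]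
    (hμν : μ ≪ ν) (hg : Measurable g) (hB : ∀ x, |g x| ≤ B) :
    Integrable (fun x ↦ (μ.rnDeriv ν x).toReal * g x - (Real.exp (g x) - 1)) ν :=
  ((integrable_rnDeriv_smul_iff hμν).2 (integrable_of_abs_le hg hB)).sub
    (integrable_exp_sub_one hg hB)

theorem klDual_eq_integral_rnDeriv [IsFiniteMeasure μ] [IsFiniteMeasure ν]
    (hμν : μ ≪ ν) (hg : Measurable g) (hB : ∀ x, |g x| ≤ B) :
    klDual g μ ν = ∫ x, ((μ.rnDeriv ν x).toReal * g x - (Real.exp (g x) - 1)) ∂ν := by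
  have hint : Integrable (fun x ↦ (μ.rnDeriv ν x).toReal * g x) ν :=
    (integrable_rnDeriv_smul_iff hμν).2 (integrable_of_abs_le hg hB)
  rw [integral_sub hint (integrable_exp_sub_one hg hB), klDual]
  exact congrArg (· - _) (integral_rnDeriv_smul hμν).symm

theorem ofReal_integral_le_lintegral_ofReal (hg : Integrable g μ) :
    ENNReal.ofReal (∫ x, g x ∂μ) ≤ ∫⁻ x, ENNReal.ofReal (g x) ∂μ := by
  rw [integral_eq_lintegral_pos_part_sub_lintegral_neg_part hg]
  exact (ENNReal.ofReal_le_ofReal (sub_le_self _ ENNReal.toReal_nonneg)).trans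
    ENNReal.ofReal_toReal_le

theorem ofReal_klDual_le_klDiv [IsFiniteMeasure μ] [IsFiniteMeasure ν]
    (hg : Measurable g) (hB : ∀ x, |g x| ≤ B) : ENNReal.ofReal (klDual g μ ν) ≤ klDiv μ ν := by
  by_cases hμν : μ ≪ ν
  · rw [klDiv_eq_lintegral_klFun_of_ac hμν, klDual_eq_integral_rnDeriv hμν hg hB]
    refine (ofReal_integral_le_lintegral_ofReal
      (integrable_rnDeriv_mul_sub_exp_sub_one hμν hg hB)).trans (lintegral_mono fun x ↦ ?_)
    exact ENNReal.ofReal_le_ofReal (mul_sub_exp_sub_one_le_klFun ENNReal.toReal_nonneg _)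
  · simp [klDiv_of_not_ac hμν]

theorem absolutelyContinuous_of_klDual_le [IsFiniteMeasure μ]
    (hS : ∀ g : X → ℝ, Measurable g → ∀ B, (∀ x, |g x| ≤ B) → klDual g μ ν ≤ S) : μ ≪ ν := by
  refine Measure.AbsolutelyContinuous.mk fun s hs hνs ↦ ?_
  have hmul (t : ℝ) : t * μ.real s ≤ S := by
    have hexp : ∫ x, (Real.exp (s.indicator (fun _ ↦ t) x) - 1) ∂ν = 0 := by
      refine integral_eq_zero_of_ae ?_
      filter_upwards [measure_eq_zero_iff_ae_notMem.1 hνs] with x hx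
      simp [hx]
    have hle := hS (s.indicator fun _ ↦ t) (measurable_const.indicator hs) |t| fun x ↦ by
      by_cases hx : x ∈ s <;> simp [hx]
    rwa [klDual, hexp, sub_zero, integral_indicator_const _ hs, smul_eq_mul, mul_comm] at hle
  by_contra hμs
  have hpos : 0 < μ.real s := ENNReal.toReal_pos hμs (measure_ne_top _ _)
  have := hmul ((S + 1) / μ.real s)
  rw [div_mul_cancel₀ _ hpos.ne'] at this
  linarith

theorem tendsto_klDual_of_ae_tendsto [IsFiniteMeasure μ] [IsFiniteMeasure ν] {h : ℕ → X → ℝ}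
    (hm : ∀ n, Measurable (h n)) (hB : ∀ n x, |h n x| ≤ B)
    (hlim : ∀ᵐ x ∂(μ + ν), Tendsto (h · x) atTop (𝓝 (g x))) :
    Tendsto (fun n ↦ klDual (h n) μ ν) atTop (𝓝 (klDual g μ ν)) := by
  obtain ⟨hlimμ, hlimν⟩ := ae_add_measure_iff.1 hlim
  refine Tendsto.sub ?_ ?_
  · exact tendsto_integral_of_dominated_convergence (fun _ ↦ B)
      (fun n ↦ (hm n).aestronglyMeasurable) (integrable_const _)
      (fun n ↦ ae_of_all _ (hB n)) hlimμ
  · refine tendsto_integral_of_dominated_convergence (fun _ ↦ Real.exp B + 1)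
      (fun n ↦ (integrable_exp_sub_one (hm n) (hB n)).aestronglyMeasurable) (integrable_const _)
      (fun n ↦ ae_of_all _ fun x ↦ exp_sub_one_abs_le (hB n x)) ?_
    filter_upwards [hlimν] with x hx
    exact ((Real.continuous_exp.tendsto _).comp hx).sub_const 1

end Duality

section TruncLog

/-- The logarithm of `x` clamped to `[(n + 1)⁻¹, n + 1]`. Clamping the argument rather than the
value keeps the truncation monotone at `x = 0`, where `Real.log` takes the junk value `0`. -/
noncomputable def truncLog (n : ℕ) (x : ℝ) : ℝ :=
  Real.log (max (n + 1 : ℝ)⁻¹ (min (n + 1) x))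

@[fun_prop]
theorem measurable_truncLog (n : ℕ) : Measurable (truncLog n) := by
  unfold truncLog
  fun_prop

theorem abs_truncLog_le (n : ℕ) (x : ℝ) : |truncLog n x| ≤ Real.log (n + 1) := by
  have hn : (1 : ℝ) ≤ n + 1 := by simp
  have hinv : (n + 1 : ℝ)⁻¹ ≤ n + 1 := (inv_le_one_of_one_le₀ hn).trans hn
  rw [truncLog, abs_le, ← Real.log_inv]
  exact ⟨Real.log_le_log (by positivity) (le_max_left _ _),
    Real.log_le_log (by positivity) (max_le hinv (min_le_left _ _))⟩

theorem sub_mul_truncLog_nonneg (n : ℕ) (x : ℝ) :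
    0 ≤ (x - max (n + 1 : ℝ)⁻¹ (min (n + 1) x)) * truncLog n x := by
  have hn : (1 : ℝ) ≤ n + 1 := by simp
  have hinv : (n + 1 : ℝ)⁻¹ ≤ 1 := inv_le_one_of_one_le₀ hn
  rcases le_total 1 x with hx | hx
  · refine mul_nonneg (sub_nonneg.2 (max_le (hinv.trans hx) (min_le_right _ _))) ?_
    exact Real.log_nonneg ((le_min hn hx).trans (le_max_right _ _))
  · refine mul_nonneg_of_nonpos_of_nonpos (sub_nonpos.2 ?_) ?_
    · exact (le_min (hx.trans hn) le_rfl).trans (le_max_right _ _)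
    · exact Real.log_nonpos (by positivity) (max_le hinv ((min_le_right _ _).trans hx))

theorem mul_truncLog_sub_exp_sub_one_nonneg (n : ℕ) (x : ℝ) :
    0 ≤ x * truncLog n x - (Real.exp (truncLog n x) - 1) := by
  have hpos : 0 < max (n + 1 : ℝ)⁻¹ (min (n + 1) x) := by positivity
  have hsub := sub_mul_truncLog_nonneg n x
  have hkl := klFun_nonneg hpos.le
  rw [klFun_apply, ← truncLog] at hkl
  rw [truncLog, Real.exp_log hpos, ← truncLog]
  linarith

theorem tendsto_mul_truncLog_sub_exp_sub_one {x : ℝ} (hx : 0 ≤ x) :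
    Tendsto (fun n ↦ x * truncLog n x - (Real.exp (truncLog n x) - 1)) atTop (𝓝 (klFun x)) := by
  have hexp (n : ℕ) : Real.exp (truncLog n x) = max (n + 1 : ℝ)⁻¹ (min (n + 1) x) :=
    Real.exp_log (by positivity)
  have hclamp : Tendsto (fun n : ℕ ↦ max (n + 1 : ℝ)⁻¹ (min (n + 1) x)) atTop (𝓝 x) := by
    have hinv : Tendsto (fun n : ℕ ↦ (n + 1 : ℝ)⁻¹) atTop (𝓝 0) := by
      simpa only [one_div] using tendsto_one_div_add_atTop_nhds_zero_nat (𝕜 := ℝ)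
    have hmin : Tendsto (fun n : ℕ ↦ min (n + 1 : ℝ) x) atTop (𝓝 x) := by
      refine tendsto_const_nhds.congr' ?_
      filter_upwards [eventually_ge_atTop ⌈x⌉₊] with n hn
      have : x ≤ n := Nat.ceil_le.1 hn
      exact (min_eq_right (by linarith)).symm
    simpa only [max_eq_right hx] using hinv.max hmin
  have hlog : Tendsto (fun n ↦ x * truncLog n x) atTop (𝓝 (x * Real.log x)) := by
    rcases hx.eq_or_lt with rfl | hx
    · simp only [zero_mul, tendsto_const_nhds]
    · exact ((Real.continuousAt_log hx.ne').tendsto.comp hclamp).const_mul x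
  have hlim := hlog.sub (hclamp.sub_const 1)
  simp only [← hexp] at hlim
  rwa [klFun_apply, show x * Real.log x + 1 - x = x * Real.log x - (x - 1) by ring]

end TruncLog

section Variational

variable {X : Type*} [MeasurableSpace X] {μ ν : Measure X} [IsFiniteMeasure μ] [IsFiniteMeasure ν]

theorem klDiv_le_ofReal_of_klDual_le {S : ℝ}
    (hS : ∀ g : X → ℝ, Measurable g → ∀ B, (∀ x, |g x| ≤ B) → klDual g μ ν ≤ S) :
    klDiv μ ν ≤ ENNReal.ofReal S := by
  have hμν := absolutelyContinuous_of_klDual_le hS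
  set f := fun x ↦ (μ.rnDeriv ν x).toReal
  set φ := fun (n : ℕ) x ↦ f x * truncLog n (f x) - (Real.exp (truncLog n (f x)) - 1)
  have hf : Measurable f := by fun_prop
  have hlog (n : ℕ) : Measurable fun x ↦ truncLog n (f x) := by fun_prop
  have hbound (n : ℕ) : ∫⁻ x, ENNReal.ofReal (φ n x) ∂ν ≤ ENNReal.ofReal S := by
    have hB x := abs_truncLog_le n (f x)
    rw [← ofReal_integral_eq_lintegral_ofReal
      (integrable_rnDeriv_mul_sub_exp_sub_one hμν (hlog n) hB)
      (ae_of_all _ fun x ↦ mul_truncLog_sub_exp_sub_one_nonneg n _),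
      ← klDual_eq_integral_rnDeriv hμν (hlog n) hB]
    exact ENNReal.ofReal_le_ofReal (hS _ (hlog n) _ hB)
  calc klDiv μ ν
      = ∫⁻ x, ENNReal.ofReal (klFun (f x)) ∂ν := klDiv_eq_lintegral_klFun_of_ac hμν
    _ = ∫⁻ x, liminf (fun n ↦ ENNReal.ofReal (φ n x)) atTop ∂ν := lintegral_congr fun x ↦
        (ENNReal.tendsto_ofReal
          (tendsto_mul_truncLog_sub_exp_sub_one ENNReal.toReal_nonneg)).liminf_eq.symm
    _ ≤ liminf (fun n ↦ ∫⁻ x, ENNReal.ofReal (φ n x) ∂ν) atTop :=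
        lintegral_liminf_le fun n ↦ by fun_prop
    _ ≤ ENNReal.ofReal S := liminf_le_of_frequently_le' (Frequently.of_forall hbound)

variable [TopologicalSpace X] [BorelSpace X]

theorem exists_boundedContinuous_tendsto_ae [NormalSpace X] [μ.WeaklyRegular] {g : X → ℝ} {B : ℝ}
    (hg : Measurable g) (hB : ∀ x, |g x| ≤ B) :
    ∃ h : ℕ → X →ᵇ ℝ, (∀ n x, |h n x| ≤ B) ∧ ∀ᵐ x ∂μ, Tendsto (h · x) atTop (𝓝 (g x)) := by
  have hmem : MemLp g 1 μ := memLp_one_iff_integrable.2 (integrable_of_abs_le hg hB)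
  choose h hh hhmem using fun n : ℕ ↦
    hmem.exists_boundedContinuous_eLpNorm_sub_le ENNReal.one_ne_top
      (ε := (n + 1 : ℝ≥0∞)⁻¹) (by simp)
  have hL1 : Tendsto (fun n ↦ eLpNorm (⇑(h n) - g) 1 μ) atTop (𝓝 0) := by
    refine tendsto_of_tendsto_of_tendsto_of_le_of_le tendsto_const_nhds ?_ (fun _ ↦ zero_le)
      fun n ↦ (eLpNorm_sub_comm _ _ _ _).trans_le (hh n)
    exact (tendsto_add_atTop_iff_nat 1).2 ENNReal.tendsto_inv_nat_nhds_zero |>.congr (by simp)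
  obtain ⟨ns, -, hns⟩ := (tendstoInMeasure_of_tendsto_eLpNorm one_ne_zero
    (fun n ↦ (hhmem n).1) hmem.1 hL1).exists_seq_tendsto_ae
  let c (b : ℝ) : X →ᵇ ℝ := .const X b
  refine ⟨fun n ↦ c (-B) ⊔ c B ⊓ h (ns n), fun n x ↦ ?_, ?_⟩
  · have hB0 := (abs_nonneg _).trans (hB x)
    exact abs_le.2 ⟨le_max_left _ _, max_le (neg_le_self hB0) (min_le_left _ _)⟩
  · filter_upwards [hns] with x hx
    have hclamp := (tendsto_const_nhds (x := -B)).max ((tendsto_const_nhds (x := B)).min hx)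
    rwa [min_eq_right (abs_le.1 (hB x)).2, max_eq_right (abs_le.1 (hB x)).1] at hclamp

variable [TopologicalSpace.PseudoMetrizableSpace X]

theorem klDual_le_of_forall_boundedContinuous {g : X → ℝ} {B S : ℝ}
    (hS : ∀ h : X →ᵇ ℝ, klDual h μ ν ≤ S) (hg : Measurable g) (hB : ∀ x, |g x| ≤ B) :
    klDual g μ ν ≤ S := by
  obtain ⟨h, hhB, hlim⟩ := exists_boundedContinuous_tendsto_ae (μ := μ + ν) hg hB
  exact le_of_tendsto' (tendsto_klDual_of_ae_tendsto (fun n ↦ (h n).continuous.measurable) hhB hlim)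
    fun n ↦ hS (h n)

theorem klDiv_eq_iSup_klDual : klDiv μ ν = ⨆ g : X →ᵇ ℝ, ENNReal.ofReal (klDual g μ ν) := by
  refine le_antisymm ?_ ?_
  · rcases eq_or_ne (⨆ g : X →ᵇ ℝ, ENNReal.ofReal (klDual g μ ν)) ⊤ with htop | hfin
    · exact htop ▸ le_top
    · rw [← ENNReal.ofReal_toReal hfin]
      refine klDiv_le_ofReal_of_klDual_le fun g hg B hB ↦
        klDual_le_of_forall_boundedContinuous (fun h ↦ ?_) hg hB
      exact (ENNReal.ofReal_le_iff_le_toReal hfin).1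
        (le_iSup (fun g : X →ᵇ ℝ ↦ ENNReal.ofReal (klDual g μ ν)) h)
  · exact iSup_le fun g ↦ ofReal_klDual_le_klDiv g.continuous.measurable g.norm_coe_le_norm

end Variational

section Mixture

variable {α : Type*} [MeasurableSpace α] {p : ℝ} {μ ν : Measure α}

instance isFiniteMeasure_mix [IsFiniteMeasure μ] [IsFiniteMeasure ν] :
    IsFiniteMeasure (mix p μ ν) := by
  have := μ.smul_finite (ENNReal.ofReal_ne_top (r := p))
  have := ν.smul_finite (ENNReal.ofReal_ne_top (r := 1 - p))
  unfold mix
  infer_instance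

theorem isProbabilityMeasure_mix [IsProbabilityMeasure μ] [IsProbabilityMeasure ν]
    (hp : p ∈ Set.Icc (0 : ℝ) 1) : IsProbabilityMeasure (mix p μ ν) := by
  constructor
  simp only [mix, Measure.add_apply, Measure.smul_apply, measure_univ, smul_eq_mul, mul_one]
  rw [← ENNReal.ofReal_add hp.1 (sub_nonneg.2 hp.2), add_sub_cancel, ENNReal.ofReal_one]

theorem mix_zero : mix 0 μ ν = ν := by
  simp [mix]

/-- The mixture `mix p μ ν`, as a finite measure depending on `(p, μ, ν)`. It is defined for every
real `p`, negative coefficients being replaced by `0` as in `mix`. -/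
noncomputable def finiteMix (q : ℝ × ProbabilityMeasure α × ProbabilityMeasure α) :
    FiniteMeasure α :=
  q.1.toNNReal • q.2.1.toFiniteMeasure + (1 - q.1).toNNReal • q.2.2.toFiniteMeasure

theorem absolutelyContinuous_mix_left (hp : 0 < p) : μ ≪ mix p μ ν :=
  (Measure.absolutelyContinuous_smul (ENNReal.ofReal_pos.2 hp).ne').add_right _

theorem absolutelyContinuous_mix_right (hp : p < 1) : ν ≪ mix p μ ν := by
  rw [mix, add_comm]
  exact (Measure.absolutelyContinuous_smul (ENNReal.ofReal_pos.2 (sub_pos.2 hp)).ne').add_right _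

theorem rnDeriv_mix_eq_one [IsFiniteMeasure μ] [IsFiniteMeasure ν] (hp : p ∈ Set.Icc (0 : ℝ) 1) :
    ∀ᵐ x ∂mix p μ ν, p * (μ.rnDeriv (mix p μ ν) x).toReal
      + (1 - p) * (ν.rnDeriv (mix p μ ν) x).toReal = 1 := by
  have := μ.smul_finite (ENNReal.ofReal_ne_top (r := p))
  have := ν.smul_finite (ENNReal.ofReal_ne_top (r := 1 - p))
  set M := mix p μ ν
  filter_upwards [M.rnDeriv_self, μ.rnDeriv_lt_top M, ν.rnDeriv_lt_top M,
    Measure.rnDeriv_add' (ENNReal.ofReal p • μ) (ENNReal.ofReal (1 - p) • ν) M,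
    Measure.rnDeriv_smul_left_of_ne_top μ M (ENNReal.ofReal_ne_top (r := p)),
    Measure.rnDeriv_smul_left_of_ne_top ν M (ENNReal.ofReal_ne_top (r := 1 - p))]
    with x hself hμ hν hadd hsmulμ hsmulν
  change M.rnDeriv M x = _ at hadd
  rw [hself, Pi.add_apply, hsmulμ, hsmulν] at hadd
  have htoReal := congrArg ENNReal.toReal hadd
  simp only [Pi.smul_apply, smul_eq_mul] at htoReal
  rw [ENNReal.toReal_add (ENNReal.mul_ne_top ENNReal.ofReal_ne_top hμ.ne)
    (ENNReal.mul_ne_top ENNReal.ofReal_ne_top hν.ne), ENNReal.toReal_mul, ENNReal.toReal_mul,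
    ENNReal.toReal_ofReal hp.1, ENNReal.toReal_ofReal (sub_nonneg.2 hp.2)] at htoReal
  exact htoReal.symm

/-- With `r = dμ/dν` and `b = dν/dM` for `M = mix p μ ν`, the gap between the two sides is the
density with respect to `M` of `KL(M ‖ ν) / p`. -/
theorem klFun_mix_le {r b : ℝ} (hp : 0 < p) (hr : 0 ≤ r) (hb : 0 ≤ b)
    (hrb : p * (r * b) + (1 - p) * b = 1) :
    klFun (r * b) + (1 - p) / p * klFun b ≤ b * klFun r := by
  have hb : 0 < b := hb.lt_of_ne' fun h ↦ by simp [h] at hrb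
  have hlog_mul : r * Real.log (r * b) = r * (Real.log r + Real.log b) := by
    rcases hr.eq_or_lt with rfl | hr
    · simp only [zero_mul]
    · rw [Real.log_mul hr.ne' hb.ne']
  have hgap : p * (b * klFun r) - p * (klFun (r * b) + (1 - p) / p * klFun b)
      = b - 1 - Real.log b := by
    have hcancel : p * (klFun (r * b) + (1 - p) / p * klFun b)
        = p * klFun (r * b) + (1 - p) * klFun b := by field_simp
    rw [hcancel]
    simp only [klFun_apply]
    linear_combination (-p * b) * hlog_mul - Real.log b * hrb
  refine le_of_mul_le_mul_left ?_ hp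
  linarith [Real.log_le_sub_one_of_pos hb]

theorem klDiv_mix_add_le [IsFiniteMeasure μ] [IsFiniteMeasure ν] (hp : p ∈ Set.Ioo (0 : ℝ) 1) :
    klDiv μ (mix p μ ν) + ENNReal.ofReal ((1 - p) / p) * klDiv ν (mix p μ ν) ≤ klDiv μ ν := by
  by_cases hμν : μ ≪ ν
  swap
  · simp only [klDiv_of_not_ac hμν, le_top]
  have hμ : μ ≪ mix p μ ν := absolutelyContinuous_mix_left hp.1
  have hν : ν ≪ mix p μ ν := absolutelyContinuous_mix_right hp.2
  have hmix := rnDeriv_mix_eq_one (μ := μ) (ν := ν) (Set.Ioo_subset_Icc_self hp)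
  set M := mix p μ ν
  rw [klDiv_eq_lintegral_klFun_of_ac hμ, klDiv_eq_lintegral_klFun_of_ac hν,
    klDiv_eq_lintegral_klFun_of_ac hμν, ← lintegral_rnDeriv_mul hν
      (f := fun x ↦ ENNReal.ofReal (klFun (μ.rnDeriv ν x).toReal)) (by fun_prop),
    ← lintegral_const_mul _ (by fun_prop), ← lintegral_add_left (by fun_prop)]
  refine lintegral_mono_ae ?_
  filter_upwards [hmix, Measure.rnDeriv_mul_rnDeriv (κ := M) hμν, ν.rnDeriv_lt_top M]
    with x hone hchain hfin
  have hc : 0 ≤ (1 - p) / p := div_nonneg (sub_nonneg.2 hp.2.le) hp.1.le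
  rw [← hchain, Pi.mul_apply, ENNReal.toReal_mul] at hone ⊢
  rw [← ENNReal.ofReal_mul hc, ← ENNReal.ofReal_add (klFun_nonneg (by positivity))
    (mul_nonneg hc (klFun_nonneg ENNReal.toReal_nonneg))]
  calc ENNReal.ofReal _
      ≤ ENNReal.ofReal ((ν.rnDeriv M x).toReal * klFun (μ.rnDeriv ν x).toReal) :=
        ENNReal.ofReal_le_ofReal
          (klFun_mix_le hp.1 ENNReal.toReal_nonneg ENNReal.toReal_nonneg hone)
    _ = ν.rnDeriv M x * ENNReal.ofReal (klFun (μ.rnDeriv ν x).toReal) := by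
        rw [ENNReal.ofReal_mul ENNReal.toReal_nonneg, ENNReal.ofReal_toReal hfin.ne]

end Mixture

section Bits

/-- Conversion of a divergence from nats to bits: multiplication by `1 / log 2`. -/
noncomputable def toBits (x : ℝ≥0∞) : EReal :=
  ((ENNReal.ofReal (Real.log 2)⁻¹ * x : ℝ≥0∞) : EReal)

theorem continuous_toBits : Continuous toBits :=
  continuous_coe_ennreal_ereal.comp (ENNReal.continuous_const_mul ENNReal.ofReal_ne_top)

theorem monotone_toBits : Monotone toBits := fun _ _ h ↦
  EReal.coe_ennreal_le_coe_ennreal_iff.2 (mul_le_mul_right h _)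

theorem toBits_top : toBits ⊤ = ⊤ := by
  have : 0 < Real.log 2 := Real.log_pos one_lt_two
  rw [toBits, ENNReal.mul_top (by simpa using this), EReal.coe_ennreal_top]

theorem toBits_add_mul {c : ℝ} (hc : 0 ≤ c) (x y : ℝ≥0∞) :
    toBits (x + ENNReal.ofReal c * y) = toBits x + (c : EReal) * toBits y := by
  have hcoe : (c : EReal) = (ENNReal.ofReal c : EReal) := by
    rw [EReal.coe_ennreal_ofReal, max_eq_left hc]
  rw [toBits, toBits, toBits, hcoe, ← EReal.coe_ennreal_mul, ← EReal.coe_ennreal_add, mul_add,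
    mul_left_comm]

variable {α : Type*} [MeasurableSpace α] {p : ℝ} {μ ν : Measure α}

theorem klDiv2_eq_toBits_klDiv [IsFiniteMeasure μ] [IsFiniteMeasure ν]
    (hmass : μ Set.univ = ν Set.univ) : klDiv2 μ ν = toBits (klDiv μ ν) := by
  have hlog : 0 < (Real.log 2)⁻¹ := inv_pos.2 (Real.log_pos one_lt_two)
  have hlogb : (fun x ↦ Real.logb 2 (μ.rnDeriv ν x).toReal)
      = fun x ↦ (Real.log 2)⁻¹ * llr μ ν x := by
    ext x
    rw [Real.logb, llr, div_eq_inv_mul]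
  have hint : Integrable (fun x ↦ Real.logb 2 (μ.rnDeriv ν x).toReal) μ
      ↔ Integrable (llr μ ν) μ := hlogb ▸ integrable_const_mul_iff hlog.ne'.isUnit _
  unfold klDiv2
  split_ifs with h
  · rw [hlogb, integral_const_mul, ← toReal_klDiv_of_measure_eq h.1 hmass, toBits,
      ← EReal.coe_ennreal_toReal (ENNReal.mul_ne_top ENNReal.ofReal_ne_top
        (klDiv_ne_top h.1 (hint.1 h.2))), ENNReal.toReal_mul, ENNReal.toReal_ofReal hlog.le]
  · rw [klDiv_eq_top_iff.2 fun hac ↦ mt hint.2 fun h' ↦ h ⟨hac, h'⟩, toBits_top]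

theorem Fp_eq_toBits [IsProbabilityMeasure μ] [IsProbabilityMeasure ν]
    (hp : p ∈ Set.Ioo (0 : ℝ) 1) :
    Fp p μ ν = toBits
      (klDiv μ (mix p μ ν) + ENNReal.ofReal ((1 - p) / p) * klDiv ν (mix p μ ν)) := by
  have := isProbabilityMeasure_mix (μ := μ) (ν := ν) (Set.Ioo_subset_Icc_self hp)
  rw [Fp, if_neg hp.1.ne', klDiv2_eq_toBits_klDiv (by simp only [measure_univ]),
    klDiv2_eq_toBits_klDiv (by simp only [measure_univ]),
    toBits_add_mul (div_nonneg (sub_nonneg.2 hp.2.le) hp.1.le)]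

theorem toBits_klDiv_mix_le_Fp [IsProbabilityMeasure μ] [IsProbabilityMeasure ν]
    (hp : p ∈ Set.Ioo (0 : ℝ) 1) : toBits (klDiv μ (mix p μ ν)) ≤ Fp p μ ν := by
  rw [Fp_eq_toBits hp]
  exact monotone_toBits le_self_add

theorem Fp_le_klDiv2 [IsProbabilityMeasure μ] [IsProbabilityMeasure ν]
    (hp : p ∈ Set.Ioo (0 : ℝ) 1) : Fp p μ ν ≤ klDiv2 μ ν := by
  rw [Fp_eq_toBits hp, klDiv2_eq_toBits_klDiv (by simp only [measure_univ])]
  exact monotone_toBits (klDiv_mix_add_le hp)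

end Bits

section MinimumValues

theorem tendsto_biInf_of_lowerSemicontinuous {P Y β : Type*} [TopologicalSpace P]
    [TopologicalSpace Y] [CompleteLinearOrder β] [DenselyOrdered β] [TopologicalSpace β]
    [OrderTopology β] {C : Set Y} (hC : IsCompact C) {p₀ : P} {l : Filter P} (hl : l ≤ 𝓝 p₀)
    {F : P → Y → β} {g : P × Y → β} (hg : LowerSemicontinuous g)
    (hgF : ∀ᶠ p in l, ∀ y ∈ C, g (p, y) ≤ F p y) (hF : ∀ᶠ p in l, ∀ y ∈ C, F p y ≤ g (p₀, y)) :
    Tendsto (fun p ↦ ⨅ y ∈ C, F p y) l (𝓝 (⨅ y ∈ C, g (p₀, y))) := by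
  refine tendsto_order.2 ⟨fun a ha ↦ ?_, fun a ha ↦ ?_⟩
  · obtain ⟨b, hab, hb⟩ := exists_between ha
    have hlow : ∀ᶠ p in 𝓝 p₀, ∀ y ∈ C, b < g (p, y) :=
      hC.eventually_forall_of_forall_eventually fun y hy ↦
        hg (p₀, y) b (hb.trans_le (biInf_le _ hy))
    filter_upwards [hl hlow, hgF] with p hp hgp
    exact hab.trans_le (le_iInf₂ fun y hy ↦ (hp y hy).le.trans (hgp y hy))
  · filter_upwards [hF] with p hp
    exact (iInf₂_mono hp).trans_lt ha

theorem exists_eq_biInf_of_lowerSemicontinuous {Y β : Type*} [TopologicalSpace Y]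
    [CompleteLinearOrder β] {C : Set Y} (hC : IsCompact C) (hne : C.Nonempty) {f : Y → β}
    (hf : LowerSemicontinuous f) : ∃ y ∈ C, f y = ⨅ z ∈ C, f z := by
  obtain ⟨y, hy, hmin⟩ := (hf.lowerSemicontinuousOn C).exists_isMinOn hne hC
  exact ⟨y, hy, le_antisymm (le_iInf₂ hmin) (biInf_le f hy)⟩

end MinimumValues

section Semicontinuity

variable {X : Type*} [TopologicalSpace X] [MeasurableSpace X] [OpensMeasurableSpace X]

theorem continuous_klDual (g : X →ᵇ ℝ) :
    Continuous fun q : FiniteMeasure X × FiniteMeasure X ↦ klDual g q.1 q.2 := by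
  let h : X →ᵇ ℝ := .ofNormedAddCommGroup (fun x ↦ Real.exp (g x) - 1) (by fun_prop)
    (Real.exp ‖g‖ + 1) fun x ↦ exp_sub_one_abs_le (g.norm_coe_le_norm x)
  exact ((FiniteMeasure.continuous_integral_boundedContinuousFunction g).comp continuous_fst).sub
    ((FiniteMeasure.continuous_integral_boundedContinuousFunction h).comp continuous_snd)

theorem continuous_finiteMix : Continuous (finiteMix (α := X)) := by
  have := ProbabilityMeasure.toFiniteMeasure_continuous (Ω := X)
  unfold finiteMix
  fun_prop

theorem lowerSemicontinuous_lintegral_ofReal [HasOuterApproxClosed X]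
    [FirstCountableTopology (ProbabilityMeasure X)] {f : X → ℝ} (hf : LowerSemicontinuous f)
    (hf0 : 0 ≤ f) :
    LowerSemicontinuous fun μ : ProbabilityMeasure X ↦ ∫⁻ x, ENNReal.ofReal (f x) ∂μ := by
  refine lowerSemicontinuous_iff_le_liminf.2 fun μ ↦ ?_
  simp_rw [lintegral_eq_lintegral_meas_lt _ (Eventually.of_forall hf0) hf.measurable.aemeasurable]
  calc ∫⁻ t in Set.Ioi 0, (μ : Measure X) {x | t < f x}
      ≤ ∫⁻ t in Set.Ioi 0, liminf (fun ρ : ProbabilityMeasure X ↦ (ρ : Measure X) {x | t < f x})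
          (𝓝 μ) :=
        lintegral_mono fun t ↦
          ProbabilityMeasure.le_liminf_measure_open_of_tendsto tendsto_id (hf.isOpen_preimage t)
    _ ≤ liminf (fun ρ : ProbabilityMeasure X ↦ ∫⁻ t in Set.Ioi 0, (ρ : Measure X) {x | t < f x})
          (𝓝 μ) :=
        lintegral_liminf_le fun ρ ↦ Antitone.measurable fun s t hst ↦
          measure_mono fun x hx ↦ hst.trans_lt hx

theorem lowerSemicontinuous_lintegral [HasOuterApproxClosed X]
    [FirstCountableTopology (ProbabilityMeasure X)] {f : X → ℝ≥0∞} (hf : LowerSemicontinuous f) :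
    LowerSemicontinuous fun μ : ProbabilityMeasure X ↦ ∫⁻ x, f x ∂μ := by
  have hsup (μ : ProbabilityMeasure X) :
      ∫⁻ x, f x ∂μ = ⨆ n : ℕ, ∫⁻ x, ENNReal.ofReal (ENNReal.truncateToReal n (f x)) ∂μ := by
    have hmin (n : ℕ) (x : X) :
        ENNReal.ofReal (ENNReal.truncateToReal n (f x)) = min (n : ℝ≥0∞) (f x) :=
      ENNReal.ofReal_toReal (ne_top_of_le_ne_top (ENNReal.natCast_ne_top n) (min_le_left _ _))
    simp only [hmin]
    rw [← lintegral_iSup (fun n ↦ measurable_const.min hf.measurable)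
      fun m n hmn x ↦ min_le_min_right _ (Nat.cast_le.2 hmn)]
    simp only [← iSup_inf_eq, ENNReal.iSup_natCast, top_inf_eq]
  simp only [hsup]
  refine lowerSemicontinuous_iSup fun n ↦ lowerSemicontinuous_lintegral_ofReal ?_
    fun x ↦ ENNReal.truncateToReal_nonneg
  exact (ENNReal.continuous_truncateToReal (ENNReal.natCast_ne_top n)).comp_lowerSemicontinuous hf
    (ENNReal.monotone_truncateToReal (ENNReal.natCast_ne_top n))

end Semicontinuity

section RateFunction

variable {X : Type*} [TopologicalSpace X] [TopologicalSpace.PseudoMetrizableSpace X]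
  [MeasurableSpace X] [BorelSpace X]

theorem lowerSemicontinuous_klDiv :
    LowerSemicontinuous fun q : FiniteMeasure X × FiniteMeasure X ↦
      klDiv (q.1 : Measure X) (q.2 : Measure X) := by
  simp only [klDiv_eq_iSup_klDual]
  exact lowerSemicontinuous_iSup fun g ↦
    (ENNReal.continuous_ofReal.comp (continuous_klDual g)).lowerSemicontinuous

theorem lowerSemicontinuous_klDiv_mix_left :
    LowerSemicontinuous fun q : ℝ × ProbabilityMeasure X × ProbabilityMeasure X ↦
      klDiv (q.2.1 : Measure X) (mix q.1 q.2.1 q.2.2) :=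
  lowerSemicontinuous_klDiv.comp
    ((ProbabilityMeasure.toFiniteMeasure_continuous.comp continuous_snd.fst).prodMk
      continuous_finiteMix)

theorem lowerSemicontinuous_klDiv_mix_right :
    LowerSemicontinuous fun q : ℝ × ProbabilityMeasure X × ProbabilityMeasure X ↦
      klDiv (q.2.2 : Measure X) (mix q.1 q.2.1 q.2.2) :=
  lowerSemicontinuous_klDiv.comp
    ((ProbabilityMeasure.toFiniteMeasure_continuous.comp continuous_snd.snd).prodMk
      continuous_finiteMix)

theorem lowerSemicontinuous_Fp {p : ℝ} (hp : p ∈ Set.Ioo (0 : ℝ) 1) :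
    LowerSemicontinuous fun q : ProbabilityMeasure X × ProbabilityMeasure X ↦
      Fp p (q.1 : Measure X) q.2 := by
  simp only [Fp_eq_toBits hp]
  have hmk : Continuous fun q : ProbabilityMeasure X × ProbabilityMeasure X ↦ (p, q) := by fun_prop
  have hK := lowerSemicontinuous_klDiv_mix_left.comp hmk
  have hN := lowerSemicontinuous_klDiv_mix_right.comp hmk
  refine continuous_toBits.comp_lowerSemicontinuous (hK.add ?_) monotone_toBits
  exact (ENNReal.continuous_const_mul ENNReal.ofReal_ne_top).comp_lowerSemicontinuous hN
    fun _ _ h ↦ mul_le_mul_right h _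

theorem lowerSemicontinuous_klDiv2 :
    LowerSemicontinuous fun q : ProbabilityMeasure X × ProbabilityMeasure X ↦
      klDiv2 (q.1 : Measure X) q.2 := by
  have hzero : Continuous fun q : ProbabilityMeasure X × ProbabilityMeasure X ↦ ((0 : ℝ), q) := by
    fun_prop
  simpa only [Function.comp_def, mix_zero, klDiv2_eq_toBits_klDiv, measure_univ] using
    continuous_toBits.comp_lowerSemicontinuous (lowerSemicontinuous_klDiv_mix_left.comp hzero)
      monotone_toBits

end RateFunction

theorem stmt_6_general {X : Type*} [TopologicalSpace X] [TopologicalSpace.PseudoMetrizableSpace X]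
    [MeasurableSpace X] [BorelSpace X] {C : Set (ProbabilityMeasure X × ProbabilityMeasure X)}
    (hC : IsCompact C) (hne : C.Nonempty) :
    (∀ p ∈ Set.Ioo (0 : ℝ) 1, ∃ q ∈ C,
      Fp p (q.1 : Measure X) q.2 = ⨅ r ∈ C, Fp p (r.1 : Measure X) r.2) ∧
    ∃ q ∈ C, (∀ r ∈ C, klDiv2 (q.1 : Measure X) q.2 ≤ klDiv2 (r.1 : Measure X) r.2) ∧
      Tendsto (fun p ↦ ⨅ r ∈ C, Fp p (r.1 : Measure X) r.2) (𝓝[>] 0)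
        (𝓝 (klDiv2 (q.1 : Measure X) q.2)) := by
  refine ⟨fun p hp ↦ exists_eq_biInf_of_lowerSemicontinuous hC hne (lowerSemicontinuous_Fp hp), ?_⟩
  obtain ⟨q, hq, hmin⟩ := exists_eq_biInf_of_lowerSemicontinuous hC hne
    (lowerSemicontinuous_klDiv2 (X := X))
  refine ⟨q, hq, fun r hr ↦ hmin.trans_le (biInf_le _ hr), ?_⟩
  have hIoo : ∀ᶠ p : ℝ in 𝓝[>] 0, p ∈ Set.Ioo 0 1 := Ioo_mem_nhdsGT one_pos
  have hlim := tendsto_biInf_of_lowerSemicontinuous hC nhdsWithin_le_nhds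
    (continuous_toBits.comp_lowerSemicontinuous lowerSemicontinuous_klDiv_mix_left
      monotone_toBits)
    (hIoo.mono fun p hp q _ ↦ toBits_klDiv_mix_le_Fp hp)
    (hIoo.mono fun p hp q _ ↦ by
      simpa only [Function.comp_apply, mix_zero, ← klDiv2_eq_toBits_klDiv, measure_univ] using
        Fp_le_klDiv2 hp)
  simp only [Function.comp_apply, mix_zero, ← klDiv2_eq_toBits_klDiv, measure_univ] at hlim
  rwa [hmin]

section FeasiblePairs

variable {dK dN : I01 → ℝ≥0∞} {εK εN : ℝ}

/-- The feasible pairs, i.e. `C_K(εK) × C_N(εN)`, as a subset of the space of pairs of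
probability measures with the product of the weak topologies. -/
def feasiblePairs (dK dN : I01 → ℝ≥0∞) (εK εN : ℝ) :
    Set (ProbabilityMeasure I01 × ProbabilityMeasure I01) :=
  {q | Feasible dK dN εK εN q.1 q.2}

theorem exists_feasible_iff {P : Measure I01 → Measure I01 → Prop} :
    (∃ μK μN, Feasible dK dN εK εN μK μN ∧ P μK μN) ↔
      ∃ q ∈ feasiblePairs dK dN εK εN, P q.1 q.2 :=
  ⟨fun ⟨μK, μN, h, hP⟩ ↦ ⟨⟨⟨μK, h.1⟩, ⟨μN, h.2.1⟩⟩, h, hP⟩, fun ⟨q, hq, hP⟩ ↦ ⟨q.1, q.2, hq, hP⟩⟩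

theorem forall_feasible_iff {P : Measure I01 → Measure I01 → Prop} :
    (∀ μK μN, Feasible dK dN εK εN μK μN → P μK μN) ↔
      ∀ q ∈ feasiblePairs dK dN εK εN, P q.1 q.2 :=
  ⟨fun h q hq ↦ h q.1 q.2 hq, fun h μK μN hμ ↦ h ⟨⟨μK, hμ.1⟩, ⟨μN, hμ.2.1⟩⟩ hμ⟩

theorem Rp_eq_biInf :
    Rp dK dN εK εN = fun p ↦ ⨅ q ∈ feasiblePairs dK dN εK εN, Fp p (q.1 : Measure I01) q.2 := by
  ext p
  simp only [Rp, exists_feasible_iff, ← sInf_image]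
  rfl

theorem feasiblePairs_eq_prod : feasiblePairs dK dN εK εN =
    {μ : ProbabilityMeasure I01 | ∫⁻ x, dK x ∂μ ≤ ENNReal.ofReal εK} ×ˢ
      {μ : ProbabilityMeasure I01 | ∫⁻ x, dN x ∂μ ≤ ENNReal.ofReal εN} := by
  ext q
  exact ⟨fun h ↦ h.2.2, fun h ↦ ⟨q.1.2, q.2.2, h⟩⟩

theorem isCompact_feasiblePairs (hdK : LowerSemicontinuous dK) (hdN : LowerSemicontinuous dN) :
    IsCompact (feasiblePairs dK dN εK εN) := by
  rw [feasiblePairs_eq_prod]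
  exact (((lowerSemicontinuous_lintegral hdK).isClosed_preimage _).prod
    ((lowerSemicontinuous_lintegral hdN).isClosed_preimage _)).isCompact

end FeasiblePairs

theorem stmt_6
    (dK dN : I01 → ℝ≥0∞)
    (hdK_lsc : LowerSemicontinuous dK) (hdN_lsc : LowerSemicontinuous dN)
    (hdK1 : dK ⟨1, Set.right_mem_Icc.mpr zero_le_one⟩ = 0)
    (hdN0 : dN ⟨0, Set.left_mem_Icc.mpr zero_le_one⟩ = 0)
    (hc : ∃ c : I01, dK c ≠ ⊤ ∧ dN c ≠ ⊤)
    (εK εN : ℝ) (hεK : 0 ≤ εK) (hεN : 0 ≤ εN)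
    -- nonemptiness of the feasible sets C_K(εK) and C_N(εN)
    (hCK : ∃ μ : Measure I01, IsProbabilityMeasure μ ∧ (∫⁻ x, dK x ∂μ) ≤ ENNReal.ofReal εK)
    (hCN : ∃ μ : Measure I01, IsProbabilityMeasure μ ∧ (∫⁻ x, dN x ∂μ) ≤ ENNReal.ofReal εN) :
    -- the infimum defining R_p is attained for each p ∈ (0,1)
    (∀ p ∈ Set.Ioo (0 : ℝ) 1, ∃ μK μN : Measure I01,
        Feasible dK dN εK εN μK μN ∧ Fp p μK μN = Rp dK dN εK εN p) ∧
    -- the minimum of KL over the feasible region is attained, and R_p converges to it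
    -- as p → 0⁺
    (∃ μKs μNs : Measure I01, Feasible dK dN εK εN μKs μNs ∧
      (∀ μK' μN' : Measure I01, Feasible dK dN εK εN μK' μN' →
        klDiv2 μKs μNs ≤ klDiv2 μK' μN') ∧
      Tendsto (Rp dK dN εK εN) (nhdsWithin 0 (Set.Ioi 0)) (nhds (klDiv2 μKs μNs))) := by
  obtain ⟨μ, hμ⟩ := hCK
  obtain ⟨ν, hν⟩ := hCN
  simpa only [exists_feasible_iff, forall_feasible_iff, Rp_eq_biInf] using
    stmt_6_general (isCompact_feasiblePairs hdK_lsc hdN_lsc)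
      ⟨(⟨μ, hμ.1⟩, ⟨ν, hν.1⟩), hμ.1, hν.1, hμ.2, hν.2⟩
end

section
/- Let u > n ≥ 1 and p = n/u. Let K be a uniformly random n-element subset of [u] = {1, …, u}, set X_i = 1{i ∈ K} for i ∈ [u], and let X̂ = (X̂_1, …, X̂_u) be any random vector of [0,1]-valued random variables jointly distributed with X = (X_1, …, X_u). Let I be uniformly distributed on [u], independent of (X, X̂). Then the mutual information satisfies I(X; X̂) ≥ u·I(X_I; X̂_I) − (1/2)·log₂(8n), where I(X_I; X̂_I) is computed under the joint law of (X_I, X̂_I) induced by the random index I. -/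
/- STATEMENT 19: Single-letterization lower bound.  Let K be a uniformly random
   n-element subset of [u] (encoded as X : Ω → (Fin u → Bool), the indicator vector,
   uniform over vectors with exactly n `true`s), let X̂ be any [0,1]^u-valued random
   vector jointly distributed with X, and let I be a uniform index independent of
   (X, X̂).  Then I(X; X̂) ≥ u·I(X_I; X̂_I) − (1/2)·log₂(8n). -/

open MeasureTheory Filter Topology
open scoped ENNReal

/-!
Let `r` be the density of the law of `(X_I, Y_I)` with respect to the product of its marginals, and
test the law of `(X, Y)` against `∏ i, r (x i, y i)`. The expected logarithm of this product is `u`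
times the mutual information of `X_I` and `Y_I`, so by Gibbs' inequality the only loss is the
logarithm of its integral against the product of the laws of `X` and `Y`. Were the law of `X` the
product of `u` copies of the law of `X_I`, that integral would be `1` by Fubini. The uniform law on
vectors of weight `n` is at most `√(8n)` times this product, so the integral is at most `√(8n)`:
with `R k = k! / (k / e) ^ k`, the product law gives the set of all these vectors the mass
`R u / (R n * R (u - n))`, and `R` is increasing with `R n ≤ √(8n)` by Stirling's formula.
-/

open InformationTheory

section KullbackLeibler

variable {α : Type*} [MeasurableSpace α] {μ ν : Measure α}

lemma klDiv2_eq_top (h : ¬(μ ≪ ν ∧ Integrable (llr μ ν) μ)) : klDiv2 μ ν = ⊤ := by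
  refine if_neg fun ⟨hac, hint⟩ => h ⟨hac, ?_⟩
  have hlog : Real.log 2 ≠ 0 := (Real.log_pos one_lt_two).ne'
  simpa [Real.logb, llr_def, div_mul_cancel₀ _ hlog] using hint.mul_const (Real.log 2)

lemma klDiv2_eq_coe (hac : μ ≪ ν) (hint : Integrable (llr μ ν) μ) :
    klDiv2 μ ν = ((∫ x, llr μ ν x ∂μ) / Real.log 2 : ℝ) := by
  rw [klDiv2, if_pos ⟨hac, hint.div_const (Real.log 2)⟩, ← integral_div]
  rfl

lemma integrable_llr_of_le_smul [IsFiniteMeasure μ] [IsFiniteMeasure ν] {c : NNReal}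
    (h : μ ≤ c • ν) : Integrable (llr μ ν) μ := by
  have hac : μ ≪ ν := Measure.absolutelyContinuous_of_le_smul h
  have hle : ∀ᵐ x ∂ν, μ.rnDeriv ν x ≤ c := by
    refine ae_le_of_forall_setLIntegral_le_of_sigmaFinite (by fun_prop) fun s _ _ => ?_
    calc ∫⁻ x in s, μ.rnDeriv ν x ∂ν ≤ μ s := Measure.setLIntegral_rnDeriv_le s
      _ ≤ c * ν s := h s
      _ = ∫⁻ _ in s, (c : ℝ≥0∞) ∂ν := (setLIntegral_const s _).symm
  obtain ⟨M, hM⟩ := (isCompact_Icc (a := (0 : ℝ)) (b := c)).exists_bound_of_continuousOn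
    continuous_klFun.continuousOn
  rw [← integrable_klFun_rnDeriv_iff hac]
  refine Integrable.of_bound (measurable_klFun.comp (by fun_prop)).aestronglyMeasurable M ?_
  filter_upwards [hle] with x hx
  exact hM _ ⟨ENNReal.toReal_nonneg, ENNReal.toReal_mono ENNReal.coe_ne_top hx⟩

lemma ae_toReal_rnDeriv_pos [SigmaFinite μ] [SigmaFinite ν] (hac : μ ≪ ν) :
    ∀ᵐ x ∂μ, 0 < (μ.rnDeriv ν x).toReal := by
  filter_upwards [Measure.rnDeriv_pos hac, hac.ae_le (Measure.rnDeriv_lt_top μ ν)] with x h0 htop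
  exact ENNReal.toReal_pos h0.ne' htop.ne

lemma absolutelyContinuous_withDensity_of_ae_ne_zero (hac : μ ≪ ν) {g : α → ℝ≥0∞}
    (hg : Measurable g) (hg0 : ∀ᵐ x ∂μ, g x ≠ 0) : μ ≪ ν.withDensity g := by
  refine Measure.AbsolutelyContinuous.mk fun s _ hs => ?_
  rw [withDensity_apply_eq_zero hg] at hs
  rw [measure_eq_zero_iff_ae_notMem]
  filter_upwards [hg0, measure_eq_zero_iff_ae_notMem.1 (hac hs)] with x h0 hx hxs
  exact hx ⟨h0, hxs⟩

lemma llr_withDensity_right_ae_eq [SigmaFinite μ] [SigmaFinite ν] {g : α → ℝ≥0∞}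
    [SigmaFinite (ν.withDensity g)] (hac : μ ≪ ν) (hg : Measurable g)
    (hg0 : ∀ᵐ x ∂μ, g x ≠ 0) :
    llr μ (ν.withDensity g) =ᵐ[μ] fun x => llr μ ν x - Real.log (g x).toReal := by
  have hac' := absolutelyContinuous_withDensity_of_ae_ne_zero hac hg hg0
  filter_upwards [hac.ae_le (Measure.rnDeriv_mul_rnDeriv (κ := ν) hac'),
    hac.ae_le (Measure.rnDeriv_withDensity ν hg), ae_toReal_rnDeriv_pos hac]
    with x hchain hdens hpos
  rw [Pi.mul_apply, hdens] at hchain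
  rw [← hchain, ENNReal.toReal_mul] at hpos
  simp only [llr_def, ← hchain, ENNReal.toReal_mul]
  rw [Real.log_mul (left_ne_zero_of_mul hpos.ne') (right_ne_zero_of_mul hpos.ne'),
    add_sub_cancel_right]

-- Gibbs' inequality for `μ` against the measure with density `g` with respect to `ν`.
lemma integral_log_sub_log_le_integral_llr [IsProbabilityMeasure μ] [IsFiniteMeasure ν]
    (hac : μ ≪ ν) (hint : Integrable (llr μ ν) μ) {g : α → ℝ≥0∞} (hg : Measurable g)
    (hg0 : ∀ᵐ x ∂μ, g x ≠ 0) (hgint : Integrable (fun x => Real.log (g x).toReal) μ)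
    {C : NNReal} (hC : ∫⁻ x, g x ∂ν ≤ C) :
    ∫ x, Real.log (g x).toReal ∂μ - Real.log C ≤ ∫ x, llr μ ν x ∂μ := by
  set κ := ν.withDensity g with hκ
  have hκC : κ Set.univ ≤ C := by simpa [hκ] using hC
  have : IsFiniteMeasure κ := ⟨hκC.trans_lt ENNReal.coe_lt_top⟩
  have hμκ : μ ≪ κ := absolutelyContinuous_withDensity_of_ae_ne_zero hac hg hg0
  have hllr := llr_withDensity_right_ae_eq hac hg hg0
  have hgibbs := integral_llr_add_mul_log_nonneg hμκ ((hint.sub hgint).congr hllr.symm)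
  rw [integral_congr_ae hllr, integral_sub hint hgint, probReal_univ] at hgibbs
  have : NeZero κ := ⟨fun h => NeZero.ne μ (Measure.absolutelyContinuous_zero_iff.1 (h ▸ hμκ))⟩
  have hlog : Real.log (κ.real Set.univ) ≤ Real.log C :=
    Real.log_le_log measureReal_univ_pos (ENNReal.toReal_mono ENNReal.coe_ne_top hκC)
  linarith

end KullbackLeibler

section Marginals

variable {α β : Type*} [MeasurableSpace α] [MeasurableSpace β] (ρ : Measure (α × β))
  [IsFiniteMeasure ρ]

lemma exists_le_smul_fst_prod_snd [Finite α] [MeasurableSingletonClass α] :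
    ∃ c : NNReal, ρ ≤ c • ρ.fst.prod ρ.snd := by
  have := Fintype.ofFinite α
  refine ⟨∑ a, (ρ.fst {a}).toNNReal⁻¹, Measure.le_iff.2 fun s hs => ?_⟩
  have hslice (a : α) : ρ (Prod.fst ⁻¹' {a} ∩ s) ≤
      (ρ.fst {a}).toNNReal⁻¹ * (ρ.snd (Prod.mk a ⁻¹' s) * ρ.fst {a}) := by
    have hfst : ρ (Prod.fst ⁻¹' {a} ∩ s) ≤ ρ.fst {a} := by
      rw [Measure.fst_apply (measurableSet_singleton a)]
      exact measure_mono Set.inter_subset_left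
    have hsnd : ρ (Prod.fst ⁻¹' {a} ∩ s) ≤ ρ.snd (Prod.mk a ⁻¹' s) := by
      rw [Measure.snd_apply (measurable_prodMk_left hs)]
      refine measure_mono ?_
      rintro ⟨_, b⟩ ⟨rfl, hb⟩
      exact hb
    rcases eq_or_ne (ρ.fst {a}) 0 with h0 | h0
    · simpa [h0] using hfst
    · rwa [ENNReal.coe_inv (by simp [ENNReal.toNNReal_eq_zero_iff, h0]),
        ENNReal.coe_toNNReal (measure_ne_top _ _), mul_comm, mul_assoc,
        ENNReal.mul_inv_cancel h0 (measure_ne_top _ _), mul_one]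
  calc ρ s ≤ ∑ a, ρ (Prod.fst ⁻¹' {a} ∩ s) := by
        refine (measure_mono fun z hz => ?_).trans (measure_iUnion_fintype_le ρ _)
        exact Set.mem_iUnion.2 ⟨z.1, rfl, hz⟩
    _ ≤ ∑ a, ↑(∑ a, (ρ.fst {a}).toNNReal⁻¹) * (ρ.snd (Prod.mk a ⁻¹' s) * ρ.fst {a}) := by
        refine Finset.sum_le_sum fun a _ => (hslice a).trans ?_
        gcongr
        exact Finset.single_le_sum (f := fun a => (ρ.fst {a}).toNNReal⁻¹)
          (fun _ _ => zero_le) (Finset.mem_univ a)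
    _ = _ := by
        rw [← Finset.mul_sum, Measure.smul_apply, Measure.prod_apply hs, lintegral_fintype]
        rfl

variable {ρ} in
lemma ae_lintegral_rnDeriv_fst_eq_one (hac : ρ ≪ ρ.fst.prod ρ.snd) :
    ∀ᵐ b ∂ρ.snd, ∫⁻ a, ρ.rnDeriv (ρ.fst.prod ρ.snd) (a, b) ∂ρ.fst = 1 := by
  refine ae_eq_of_forall_setLIntegral_eq_of_sigmaFinite
    (Measurable.lintegral_prod_left (by fun_prop)) measurable_const fun s hs _ => ?_
  have h := Measure.setLIntegral_rnDeriv hac (Set.univ ×ˢ s)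
  rw [setLIntegral_prod_symm _ (by fun_prop), Measure.restrict_univ] at h
  rw [h, setLIntegral_one, Measure.snd_apply hs, Set.univ_prod]

end Marginals

section ProductDensity

variable {ι α β : Type*} [Fintype ι] [MeasurableSpace α] [MeasurableSpace β]

lemma lintegral_pi_prod (κ : ι → Measure α) [∀ i, IsProbabilityMeasure (κ i)]
    {f : ι → α → ℝ≥0∞} (hf : ∀ i, Measurable (f i)) :
    ∫⁻ x, ∏ i, f i (x i) ∂Measure.pi κ = ∏ i, ∫⁻ a, f i a ∂κ i := by
  rw [ProbabilityTheory.lintegral_prod_eq_prod_lintegral_of_indepFun _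
    (fun i (x : ι → α) => f i (x i))
    (ProbabilityTheory.iIndepFun_pi fun i => (hf i).aemeasurable)
    (fun i => (hf i).comp (measurable_pi_apply i))]
  exact Finset.prod_congr rfl fun i _ =>
    (measurePreserving_eval κ i).lintegral_comp (hf i)

lemma lintegral_prod_density_le {P : Measure (ι → α)} {Q : Measure (ι → β)} [SFinite P]
    [IsProbabilityMeasure Q] {κ : ι → Measure α} [∀ i, IsProbabilityMeasure (κ i)] {C : ℝ≥0∞}
    (hP : P ≤ C • Measure.pi κ) {r : ι → α × β → ℝ≥0∞} (hr : ∀ i, Measurable (r i))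
    (hr1 : ∀ᵐ y ∂Q, ∀ i, ∫⁻ a, r i (a, y i) ∂κ i = 1) :
    ∫⁻ z, ∏ i, r i (z.1 i, z.2 i) ∂P.prod Q ≤ C := by
  rw [lintegral_prod_symm _ (by fun_prop)]
  calc ∫⁻ y, ∫⁻ x, ∏ i, r i (x i, y i) ∂P ∂Q
      ≤ ∫⁻ y, ∫⁻ x, ∏ i, r i (x i, y i) ∂(C • Measure.pi κ) ∂Q := by gcongr
    _ = ∫⁻ y, C * ∏ i, ∫⁻ a, r i (a, y i) ∂κ i ∂Q := by
        simp only [lintegral_smul_measure, smul_eq_mul]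
        congr! 3 with y
        exact lintegral_pi_prod κ (f := fun i a => r i (a, y i)) (by fun_prop)
    _ = ∫⁻ _, C ∂Q := by
        refine lintegral_congr_ae ?_
        filter_upwards [hr1] with y hy
        simp [hy]
    _ = C := by simp

end ProductDensity

section RandomCoordinate

variable {Ω ι α β γ : Type*} [MeasurableSpace Ω] [MeasurableSpace ι] [MeasurableSpace α]
  [MeasurableSpace β] [MeasurableSpace γ]

lemma measurable_randomCoord [Countable ι] [MeasurableSingletonClass ι] {Z : Ω → ι → γ}
    (hZ : Measurable Z) : Measurable fun q : Ω × ι => Z q.1 q.2 :=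
  measurable_from_prod_countable_left fun i => (measurable_pi_apply i).comp hZ

variable [Fintype ι] {μ : Measure Ω}

variable (ι) in
/-- The uniform probability measure on a finite index type, as normalized counting measure; it is
zero when the type is empty. -/
noncomputable def uniformIndex : Measure ι := (Fintype.card ι : ℝ≥0∞)⁻¹ • Measure.count

/-- The law of `Z_I`, where `Z` is a random vector under `μ` and the index `I` is uniform on `ι`
and independent of `Z`. -/
noncomputable def randomCoordLaw (μ : Measure Ω) (Z : Ω → ι → γ) : Measure γ :=
  (μ.prod (uniformIndex ι)).map fun q => Z q.1 q.2

lemma ae_uniformIndex_iff {p : ι → Prop} : (∀ᵐ i ∂uniformIndex ι, p i) ↔ ∀ i, p i := by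
  rw [uniformIndex, Measure.ae_ennreal_smul_measure_iff (by simp), Measure.ae_count_iff]

variable [MeasurableSingletonClass ι] {X : Ω → ι → α} {Y : Ω → ι → β} {Z : Ω → ι → γ}

instance isFiniteMeasure_uniformIndex : IsFiniteMeasure (uniformIndex ι) := by
  cases isEmpty_or_nonempty ι
  · rw [Measure.eq_zero_of_isEmpty (uniformIndex ι)]
    infer_instance
  · exact ⟨by simp [uniformIndex, ENNReal.inv_mul_cancel]⟩

instance isProbabilityMeasure_uniformIndex [Nonempty ι] :
    IsProbabilityMeasure (uniformIndex ι) :=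
  ⟨by simp [uniformIndex, ENNReal.inv_mul_cancel]⟩

lemma integral_uniformIndex (f : ι → ℝ) :
    ∫ i, f i ∂uniformIndex ι = (Fintype.card ι : ℝ)⁻¹ * ∑ i, f i := by
  simp [uniformIndex, integral_smul_measure, integral_fintype]

lemma isProbabilityMeasure_randomCoordLaw [Nonempty ι] [IsProbabilityMeasure μ]
    (hZ : Measurable Z) : IsProbabilityMeasure (randomCoordLaw μ Z) :=
  Measure.isProbabilityMeasure_map (measurable_randomCoord hZ).aemeasurable

lemma fst_randomCoordLaw (hY : Measurable Y) :
    (randomCoordLaw μ fun ω i => (X ω i, Y ω i)).fst = randomCoordLaw μ X :=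
  Measure.fst_map_prodMk (measurable_randomCoord hY)

lemma snd_randomCoordLaw (hX : Measurable X) :
    (randomCoordLaw μ fun ω i => (X ω i, Y ω i)).snd = randomCoordLaw μ Y :=
  Measure.snd_map_prodMk (measurable_randomCoord hX)

lemma ae_forall_of_ae_randomCoordLaw (hZ : Measurable Z) {p : γ → Prop}
    (hp : ∀ᵐ z ∂randomCoordLaw μ Z, p z) : ∀ᵐ ω ∂μ, ∀ i, p (Z ω i) :=
  (Measure.ae_ae_of_ae_prod (ae_of_ae_map (measurable_randomCoord hZ).aemeasurable hp)).mono
    fun _ => ae_uniformIndex_iff.1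

lemma integrable_sum_of_integrable_randomCoordLaw [Nonempty ι] [SFinite μ]
    (hZ : Measurable Z) {f : γ → ℝ} (hf : Integrable f (randomCoordLaw μ Z)) :
    Integrable (fun ω => ∑ i, f (Z ω i)) μ := by
  have h := (hf.comp_measurable (measurable_randomCoord hZ)).integral_prod_left
  simpa [integral_uniformIndex] using h.const_mul (Fintype.card ι : ℝ)

lemma integral_sum_eq_card_mul_integral_randomCoordLaw [Nonempty ι] [SFinite μ]
    (hZ : Measurable Z) {f : γ → ℝ} (hf : Integrable f (randomCoordLaw μ Z)) :
    ∫ ω, ∑ i, f (Z ω i) ∂μ = Fintype.card ι * ∫ z, f z ∂randomCoordLaw μ Z := by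
  rw [randomCoordLaw, integral_map (measurable_randomCoord hZ).aemeasurable hf.1,
    integral_prod (fun q => f (Z q.1 q.2)) (hf.comp_measurable (measurable_randomCoord hZ))]
  simp [integral_uniformIndex, integral_const_mul]

lemma randomCoordLaw_singleton_of_ae_card_eq [MeasurableSingletonClass α] [DecidableEq α]
    [IsProbabilityMeasure μ] (hX : Measurable X) {a : α} {k : ℕ}
    (hk : ∀ᵐ ω ∂μ, (Finset.univ.filter (X ω · = a)).card = k) :
    randomCoordLaw μ X {a} = k / Fintype.card ι := by
  have hmeas := measurable_randomCoord hX
  have hfiber : ∀ᵐ ω ∂μ,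
      uniformIndex ι (Prod.mk ω ⁻¹' ((fun q => X q.1 q.2) ⁻¹' {a})) = k / Fintype.card ι := by
    filter_upwards [hk] with ω hω
    rw [← hω, uniformIndex, Measure.smul_apply, smul_eq_mul, ← ENNReal.div_eq_inv_mul,
      ← Measure.count_apply_finset]
    simp [Set.preimage]
  rw [randomCoordLaw, Measure.map_apply hmeas (measurableSet_singleton a),
    Measure.prod_apply (hmeas (measurableSet_singleton a)), lintegral_congr_ae hfiber]
  simp

end RandomCoordinate

section SingleLetter

variable {Ω ι α β γ : Type*} [MeasurableSpace Ω] [Fintype ι] [Nonempty ι] [MeasurableSpace ι]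
  [MeasurableSingletonClass ι] [MeasurableSpace α] [MeasurableSpace β] [MeasurableSpace γ]
  {μ : Measure Ω} [IsProbabilityMeasure μ] {X : Ω → ι → α} {Y : Ω → ι → β} {C : NNReal}

lemma lintegral_prod_rnDeriv_randomCoordLaw_le (hX : Measurable X) (hY : Measurable Y)
    (hP : μ.map X ≤ C • Measure.pi fun _ : ι => randomCoordLaw μ X)
    {ν : Measure (α × β)} (hν : ν = randomCoordLaw μ fun ω i => (X ω i, Y ω i))
    (hac : ν ≪ ν.fst.prod ν.snd) :
    ∫⁻ z, ∏ i, ν.rnDeriv (ν.fst.prod ν.snd) (z.1 i, z.2 i) ∂(μ.map X).prod (μ.map Y) ≤ C := by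
  have hfst : ν.fst = randomCoordLaw μ X := hν ▸ fst_randomCoordLaw hY
  have hsnd : ν.snd = randomCoordLaw μ Y := hν ▸ snd_randomCoordLaw hX
  have := Measure.isProbabilityMeasure_map (μ := μ) hY.aemeasurable
  have : IsProbabilityMeasure ν := by
    rw [hν]
    exact isProbabilityMeasure_randomCoordLaw (by fun_prop)
  have hmass : Measurable fun b => ∫⁻ a, ν.rnDeriv (ν.fst.prod ν.snd) (a, b) ∂ν.fst :=
    (Measure.measurable_rnDeriv _ _).lintegral_prod_left'
  refine lintegral_prod_density_le (κ := fun _ => ν.fst) (by rwa [hfst])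
    (fun _ => Measure.measurable_rnDeriv _ _) ((ae_map_iff hY.aemeasurable ?_).2 ?_)
  · simp only [Set.ofPred_forall]
    exact .iInter fun i =>
      measurableSet_eq_fun (hmass.comp (measurable_pi_apply i)) measurable_const
  · refine ae_forall_of_ae_randomCoordLaw hY
      (p := fun b => ∫⁻ a, ν.rnDeriv (ν.fst.prod ν.snd) (a, b) ∂ν.fst = 1) ?_
    rw [← hsnd]
    exact ae_lintegral_rnDeriv_fst_eq_one hac

lemma log_prod_rnDeriv_ae_eq_sum_llr {Z : Ω → ι → γ} (hZ : Measurable Z) {σ : Measure γ}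
    [SigmaFinite σ] (hac : randomCoordLaw μ Z ≪ σ) :
    (fun ω => Real.log (∏ i, (randomCoordLaw μ Z).rnDeriv σ (Z ω i)).toReal) =ᵐ[μ]
      fun ω => ∑ i, llr (randomCoordLaw μ Z) σ (Z ω i) := by
  have := isProbabilityMeasure_randomCoordLaw (μ := μ) hZ
  filter_upwards [ae_forall_of_ae_randomCoordLaw hZ (ae_toReal_rnDeriv_pos hac)] with ω hω
  rw [ENNReal.toReal_prod, Real.log_prod fun i _ => (hω i).ne']
  rfl

lemma card_mul_integral_llr_sub_log_le (hX : Measurable X) (hY : Measurable Y)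
    (hP : μ.map X ≤ C • Measure.pi fun _ : ι => randomCoordLaw μ X)
    {ν : Measure (α × β)} (hν : ν = randomCoordLaw μ fun ω i => (X ω i, Y ω i))
    (hacν : ν ≪ ν.fst.prod ν.snd) (hintν : Integrable (llr ν (ν.fst.prod ν.snd)) ν)
    {J : Measure ((ι → α) × (ι → β))} (hJ : J = μ.map fun ω => (X ω, Y ω))
    {π : Measure ((ι → α) × (ι → β))} (hπ : π = (μ.map X).prod (μ.map Y))
    (hacJ : J ≪ π) (hintJ : Integrable (llr J π) J) :
    Fintype.card ι * ∫ z, llr ν (ν.fst.prod ν.snd) z ∂ν - Real.log C ≤ ∫ z, llr J π z ∂J := by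
  have hC := lintegral_prod_rnDeriv_randomCoordLaw_le hX hY hP hν hacν
  have hZ : Measurable fun ω i => (X ω i, Y ω i) := by fun_prop
  have hXY : Measurable fun ω => (X ω, Y ω) := by fun_prop
  have := isProbabilityMeasure_randomCoordLaw (μ := μ) hZ
  have := Measure.isProbabilityMeasure_map (μ := μ) hXY.aemeasurable
  have := Measure.isProbabilityMeasure_map (μ := μ) hX.aemeasurable
  have := Measure.isProbabilityMeasure_map (μ := μ) hY.aemeasurable
  subst hν hJ hπ
  set ν := randomCoordLaw μ fun ω i => (X ω i, Y ω i)
  set g : (ι → α) × (ι → β) → ℝ≥0∞ := fun z => ∏ i, ν.rnDeriv (ν.fst.prod ν.snd) (z.1 i, z.2 i)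
  have hg : Measurable g := by fun_prop
  have hg0 : ∀ᵐ ω ∂μ, g (X ω, Y ω) ≠ 0 := by
    filter_upwards [ae_forall_of_ae_randomCoordLaw hZ (ae_toReal_rnDeriv_pos hacν)] with ω hω
    exact Finset.prod_ne_zero_iff.2 fun i _ => (ENNReal.toReal_pos_iff.1 (hω i)).1.ne'
  have hlogg : Measurable fun z => Real.log (g z).toReal := by fun_prop
  have hsum : (fun ω => Real.log (g (X ω, Y ω)).toReal) =ᵐ[μ]
      fun ω => ∑ i, llr ν (ν.fst.prod ν.snd) (X ω i, Y ω i) :=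
    log_prod_rnDeriv_ae_eq_sum_llr hZ hacν
  calc Fintype.card ι * ∫ z, llr ν (ν.fst.prod ν.snd) z ∂ν - Real.log C
      = ∫ z, Real.log (g z).toReal ∂μ.map (fun ω => (X ω, Y ω)) - Real.log C := by
        rw [integral_map hXY.aemeasurable hlogg.aestronglyMeasurable, integral_congr_ae hsum,
          integral_sum_eq_card_mul_integral_randomCoordLaw hZ hintν]
    _ ≤ _ := by
        refine integral_log_sub_log_le_integral_llr hacJ hintJ hg ?_ ?_ hC
        · exact (ae_map_iff hXY.aemeasurable (hg (measurableSet_singleton 0).compl)).2 hg0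
        · refine (integrable_map_measure hlogg.aestronglyMeasurable hXY.aemeasurable).2 ?_
          exact (integrable_sum_of_integrable_randomCoordLaw hZ hintν).congr hsum.symm

lemma card_mul_klDiv2_randomCoordLaw_sub_logb_le [Finite α] [MeasurableSingletonClass α]
    (hX : Measurable X) (hY : Measurable Y)
    (hP : μ.map X ≤ C • Measure.pi fun _ : ι => randomCoordLaw μ X)
    {ν : Measure (α × β)} (hν : ν = randomCoordLaw μ fun ω i => (X ω i, Y ω i)) :
    ((Fintype.card ι : ℝ) : EReal) * klDiv2 ν (ν.fst.prod ν.snd) - (Real.logb 2 C : ℝ) ≤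
      klDiv2 (μ.map fun ω => (X ω, Y ω)) ((μ.map X).prod (μ.map Y)) := by
  by_cases hfin : μ.map (fun ω => (X ω, Y ω)) ≪ (μ.map X).prod (μ.map Y) ∧
    Integrable (llr (μ.map fun ω => (X ω, Y ω)) ((μ.map X).prod (μ.map Y)))
      (μ.map fun ω => (X ω, Y ω))
  · have : IsProbabilityMeasure ν := by
      rw [hν]
      exact isProbabilityMeasure_randomCoordLaw (by fun_prop)
    obtain ⟨c, hc⟩ := exists_le_smul_fst_prod_snd ν
    have hac := Measure.absolutelyContinuous_of_le_smul hc
    have hint := integrable_llr_of_le_smul hc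
    rw [klDiv2_eq_coe hac hint, klDiv2_eq_coe hfin.1 hfin.2, Real.logb]
    norm_cast
    rw [mul_div_assoc', ← sub_div]
    refine div_le_div_of_nonneg_right ?_ (Real.log_nonneg one_le_two)
    exact card_mul_integral_llr_sub_log_le hX hY hP hν hac hint rfl rfl hfin.1 hfin.2
  · rw [klDiv2_eq_top hfin]
    exact le_top

end SingleLetter

section Binomial

/-- Stirling's ratio `k! / (k / e) ^ k`, without the square root factor of
`Stirling.stirlingSeq`; it is `1` at `k = 0`. -/
noncomputable def stirlingRatio (k : ℕ) : ℝ := k.factorial / (k / Real.exp 1) ^ k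

lemma stirlingRatio_pos (k : ℕ) : 0 < stirlingRatio k := by
  rcases k.eq_zero_or_pos with rfl | hk
  · simp [stirlingRatio]
  · unfold stirlingRatio
    positivity

lemma stirlingRatio_succ_mul (k : ℕ) :
    stirlingRatio (k + 1) * (1 + (k : ℝ)⁻¹) ^ k = Real.exp 1 * stirlingRatio k := by
  rcases k.eq_zero_or_pos with rfl | hk
  · simp [stirlingRatio]
  · have h : (1 + (k : ℝ)⁻¹) = (k + 1) / k := by field_simp
    simp only [stirlingRatio, Nat.factorial_succ, h, div_pow, pow_succ]
    push_cast
    field_simp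

lemma monotone_stirlingRatio : Monotone stirlingRatio := by
  refine monotone_nat_of_le_succ fun k => le_of_mul_le_mul_left ?_ (Real.exp_pos 1)
  calc Real.exp 1 * stirlingRatio k = stirlingRatio (k + 1) * (1 + (k : ℝ)⁻¹) ^ k :=
        (stirlingRatio_succ_mul k).symm
    _ ≤ stirlingRatio (k + 1) * Real.exp 1 :=
        mul_le_mul_of_nonneg_left Real.one_add_inv_pow_le_exp (stirlingRatio_pos _).le
    _ = Real.exp 1 * stirlingRatio (k + 1) := mul_comm _ _

lemma stirlingSeq_le_two {n : ℕ} (hn : 1 ≤ n) : Stirling.stirlingSeq n ≤ 2 := by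
  obtain ⟨k, rfl⟩ := Nat.exists_eq_add_of_le' hn
  calc Stirling.stirlingSeq (k + 1) ≤ Stirling.stirlingSeq 1 :=
        Stirling.stirlingSeq'_antitone k.zero_le
    _ = Real.exp 1 / √2 := Stirling.stirlingSeq_one
    _ ≤ 2 := by
        rw [div_le_iff₀ (by positivity)]
        have hsqrt : (1.41 : ℝ) ≤ √2 := Real.le_sqrt_of_sq_le (by norm_num)
        linarith [Real.exp_one_lt_d9]

lemma stirlingRatio_le_sqrt {n : ℕ} (hn : 1 ≤ n) : stirlingRatio n ≤ √(8 * n) := by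
  calc stirlingRatio n = √(2 * n) * Stirling.stirlingSeq n := by
        unfold stirlingRatio Stirling.stirlingSeq
        field_simp
    _ ≤ √(2 * n) * 2 := by gcongr; exact stirlingSeq_le_two hn
    _ = √(8 * n) := by
        rw [show (8 * n : ℝ) = 2 * n * 2 ^ 2 by ring, Real.sqrt_mul (x := 2 * n) (by positivity),
          Real.sqrt_sq zero_le_two]

lemma choose_mul_pow_mul_pow_eq (n m : ℕ) :
    ((n + m).choose n : ℝ) * ((n / (n + m : ℕ)) ^ n * (m / (n + m : ℕ)) ^ m) =
      stirlingRatio (n + m) / (stirlingRatio n * stirlingRatio m) := by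
  have hpow (k : ℕ) : (k : ℝ) ^ k ≠ 0 := by exact_mod_cast (Nat.pow_self_pos (n := k)).ne'
  have hn := hpow n
  have hm := hpow m
  have hnm := hpow (n + m)
  rw [pow_add] at hnm
  rw [Nat.cast_add_choose]
  simp only [stirlingRatio, div_pow, pow_add]
  field_simp

lemma inv_choose_le {n : ℕ} (hn : 1 ≤ n) (m : ℕ) :
    ((n + m).choose n : ℝ)⁻¹ ≤ √(8 * n) * ((n / (n + m : ℕ)) ^ n * (m / (n + m : ℕ)) ^ m) := by
  have hchoose : (0 : ℝ) < (n + m).choose n := by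
    exact_mod_cast Nat.choose_pos (Nat.le_add_right n m)
  rw [inv_le_iff_one_le_mul₀ hchoose, mul_assoc, mul_comm _ ((n + m).choose n : ℝ),
    choose_mul_pow_mul_pow_eq]
  have hn0 := stirlingRatio_pos n
  have hm0 := stirlingRatio_pos m
  calc (1 : ℝ) = stirlingRatio n * (stirlingRatio m / (stirlingRatio n * stirlingRatio m)) := by
        field_simp
    _ ≤ √(8 * n) * (stirlingRatio (n + m) / (stirlingRatio n * stirlingRatio m)) := by
        gcongr
        · exact stirlingRatio_le_sqrt hn
        · exact monotone_stirlingRatio (Nat.le_add_left m n)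

end Binomial

section WeightSlice

lemma measure_le_of_singleton_le {α : Type*} [Countable α] [MeasurableSpace α]
    [MeasurableSingletonClass α] {μ ν : Measure α} (h : ∀ a, μ {a} ≤ ν {a}) : μ ≤ ν := by
  refine Measure.le_iff.2 fun s hs => ?_
  rw [← μ.tsum_indicator_apply_singleton s hs, ← ν.tsum_indicator_apply_singleton s hs]
  exact ENNReal.tsum_le_tsum fun a => Set.indicator_le_indicator (h a)

variable {ι : Type*} [Fintype ι] [DecidableEq ι] {n : ℕ} {x : ι → Bool}

variable (ι) in
/-- The Boolean vectors of Hamming weight `n`, i.e. the indicator vectors of the `n`-element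
subsets of `ι`. -/
def weightSlice (n : ℕ) : Finset (ι → Bool) :=
  Finset.univ.filter fun x => (Finset.univ.filter fun i => x i = true).card = n

lemma mem_weightSlice :
    x ∈ weightSlice ι n ↔ (Finset.univ.filter fun i => x i = true).card = n := by
  simp [weightSlice]

lemma card_weightSlice (n : ℕ) : (weightSlice ι n).card = (Fintype.card ι).choose n := by
  rw [← Finset.card_univ, ← Finset.card_powersetCard]
  refine Finset.card_bij' (fun x _ => Finset.univ.filter fun i => x i = true)
    (fun s _ i => decide (i ∈ s)) ?_ ?_ ?_ ?_
  · intro x hx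
    simpa [weightSlice] using hx
  · intro s hs
    simpa [weightSlice] using hs
  · intro x _
    simp
  · intro s _
    simp

lemma card_filter_eq_false_of_mem_weightSlice (hx : x ∈ weightSlice ι n) :
    (Finset.univ.filter (x · = false)).card = Fintype.card ι - n := by
  have hsplit := Finset.card_filter_add_card_filter_not (s := Finset.univ) (x · = true)
  rw [mem_weightSlice.1 hx, Finset.card_univ] at hsplit
  simpa using Nat.eq_sub_of_add_eq' hsplit

lemma le_card_of_mem_weightSlice (hx : x ∈ weightSlice ι n) : n ≤ Fintype.card ι :=
  mem_weightSlice.1 hx ▸ Finset.card_le_univ _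

lemma prod_apply_of_mem_weightSlice {M : Type*} [CommMonoid M] (f : Bool → M)
    (hx : x ∈ weightSlice ι n) :
    ∏ i, f (x i) = f true ^ n * f false ^ (Fintype.card ι - n) := by
  have hf (i : ι) : f (x i) = if x i = true then f true else f false := by cases x i <;> rfl
  simp only [hf, Finset.prod_ite, Finset.prod_const, Bool.not_eq_true, mem_weightSlice.1 hx,
    card_filter_eq_false_of_mem_weightSlice hx]

lemma inv_card_weightSlice_le_prod (hn : 1 ≤ n) (hx : x ∈ weightSlice ι n) {κ : Measure Bool}
    (htrue : κ {true} = n / Fintype.card ι)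
    (hfalse : κ {false} = (Fintype.card ι - n : ℕ) / Fintype.card ι) :
    ((weightSlice ι n).card : ℝ≥0∞)⁻¹ ≤ NNReal.sqrt (8 * n) * ∏ i, κ {x i} := by
  rw [prod_apply_of_mem_weightSlice (fun b => κ {b}) hx, htrue, hfalse, card_weightSlice]
  obtain ⟨m, hm⟩ := Nat.exists_eq_add_of_le (le_card_of_mem_weightSlice hx)
  rw [hm, Nat.add_sub_cancel_left]
  have hN : ((n + m : ℕ) : ℝ≥0∞) ≠ 0 := by exact_mod_cast (Nat.add_pos_left hn m).ne'
  have hchoose : ((n + m).choose n : ℝ≥0∞) ≠ 0 := by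
    exact_mod_cast (Nat.choose_pos (Nat.le_add_right n m)).ne'
  rw [← ENNReal.toReal_le_toReal (by finiteness) (by finiteness)]
  simpa [-Nat.cast_add] using inv_choose_le hn m

lemma toMeasure_uniformOfFinset_weightSlice_le (hn : 1 ≤ n) (hS : (weightSlice ι n).Nonempty)
    {κ : Measure Bool} [SigmaFinite κ] (htrue : κ {true} = n / Fintype.card ι)
    (hfalse : κ {false} = (Fintype.card ι - n : ℕ) / Fintype.card ι) :
    (PMF.uniformOfFinset (weightSlice ι n) hS).toMeasure ≤
      NNReal.sqrt (8 * n) • Measure.pi fun _ : ι => κ := by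
  refine measure_le_of_singleton_le fun x => ?_
  rw [PMF.toMeasure_apply_singleton _ _ (measurableSet_singleton x), Measure.smul_apply,
    Measure.pi_singleton]
  by_cases hx : x ∈ weightSlice ι n
  · rw [PMF.uniformOfFinset_apply_of_mem hS hx]
    exact inv_card_weightSlice_le_prod hn hx htrue hfalse
  · simp [PMF.uniformOfFinset_apply_of_notMem hS hx]

end WeightSlice

section UniformWeightSlice

variable {Ω ι : Type*} [MeasurableSpace Ω] [Fintype ι] [DecidableEq ι] [MeasurableSpace ι]
  [MeasurableSingletonClass ι] {μ : Measure Ω} [IsProbabilityMeasure μ] {n : ℕ}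
  {X : Ω → ι → Bool}

lemma map_le_sqrt_smul_pi_randomCoordLaw [Nonempty ι] (hn : 1 ≤ n) (hX : Measurable X)
    (hS : (weightSlice ι n).Nonempty)
    (hlaw : μ.map X = (PMF.uniformOfFinset (weightSlice ι n) hS).toMeasure) :
    μ.map X ≤ NNReal.sqrt (8 * n) • Measure.pi fun _ : ι => randomCoordLaw μ X := by
  have hmem : ∀ᵐ ω ∂μ, X ω ∈ weightSlice ι n := by
    refine ae_of_ae_map (p := (· ∈ weightSlice ι n)) hX.aemeasurable ?_
    rw [hlaw, ae_iff, PMF.toMeasure_uniformOfFinset_apply hS _ (Set.toFinite _).measurableSet]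
    simp
  have := isProbabilityMeasure_randomCoordLaw (μ := μ) hX
  rw [hlaw]
  exact toMeasure_uniformOfFinset_weightSlice_le hn hS
    (randomCoordLaw_singleton_of_ae_card_eq hX (hmem.mono fun _ => mem_weightSlice.1))
    (randomCoordLaw_singleton_of_ae_card_eq hX
      (hmem.mono fun _ => card_filter_eq_false_of_mem_weightSlice))

theorem stmt_19_general {β : Type*} [MeasurableSpace β] {Y : Ω → ι → β} (hn : 1 ≤ n)
    (hX : Measurable X) (hY : Measurable Y) (hS : (weightSlice ι n).Nonempty)
    (hlaw : μ.map X = (PMF.uniformOfFinset (weightSlice ι n) hS).toMeasure)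
    {ν : Measure (Bool × β)} (hν : ν = randomCoordLaw μ fun ω i => (X ω i, Y ω i)) :
    klDiv2 (μ.map fun ω => (X ω, Y ω)) ((μ.map X).prod (μ.map Y)) ≥
      ((Fintype.card ι : ℝ) : EReal) * klDiv2 ν (ν.fst.prod ν.snd) -
        (Real.logb 2 (8 * n) / 2 : ℝ) := by
  obtain ⟨x, hx⟩ := hS
  have : Nonempty ι :=
    Fintype.card_pos_iff.1 (hn.trans (le_card_of_mem_weightSlice hx))
  have hlog : Real.logb 2 (NNReal.sqrt (8 * n)) = Real.logb 2 (8 * n) / 2 := by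
    rw [Real.coe_sqrt, Real.logb, Real.log_sqrt (by positivity)]
    push_cast
    rw [Real.logb, div_right_comm]
  rw [← hlog]
  exact card_mul_klDiv2_randomCoordLaw_sub_logb_le hX hY
    (map_le_sqrt_smul_pi_randomCoordLaw hn hX _ hlaw) hν

end UniformWeightSlice

theorem stmt_19 (u n : ℕ) (hn : 1 ≤ n) (hu : n < u)
    {Ω : Type*} [MeasurableSpace Ω] (μ : Measure Ω) [IsProbabilityMeasure μ]
    (X : Ω → (Fin u → Bool)) (Xh : Ω → (Fin u → I01))
    (hX : Measurable X) (hXh : Measurable Xh)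
    -- X is the indicator vector of a uniformly random n-element subset of [u]
    (S : Finset (Fin u → Bool))
    (hS : S = Finset.univ.filter
      (fun f : Fin u → Bool => (Finset.univ.filter (fun i => f i = true)).card = n))
    (hSne : S.Nonempty)
    (hlaw : Measure.map X μ = (PMF.uniformOfFinset S hSne).toMeasure) :
    -- joint law of (X, X̂) and its marginals
    let joint : Measure ((Fin u → Bool) × (Fin u → I01)) :=
      Measure.map (fun ω => (X ω, Xh ω)) μ
    -- the uniform distribution of the random index I on [u]
    let ι : Measure (Fin u) := ((u : ℝ≥0∞))⁻¹ • Measure.count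
    -- joint law of (X_I, X̂_I) under the independent uniform index I
    let ν : Measure (Bool × I01) :=
      Measure.map (fun q : Ω × Fin u => (X q.1 q.2, Xh q.1 q.2)) (μ.prod ι)
    -- I(X; X̂) ≥ u·I(X_I; X̂_I) − (1/2)·log₂(8n)
    klDiv2 joint ((Measure.map X μ).prod (Measure.map Xh μ))
      ≥ ((u : ℝ) : EReal) * klDiv2 ν ((ν.map Prod.fst).prod (ν.map Prod.snd))
        - ((Real.logb 2 (8 * n) / 2 : ℝ) : EReal) := by
  subst hS
  simpa only [randomCoordLaw, uniformIndex, Measure.fst, Measure.snd, Fintype.card_fin] using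
    stmt_19_general hn hX hXh hSne hlaw rfl
end
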